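/- For every integer c ≥ 3, every CPA-structure on the free-nilpotent Lie algebra F_{3,c} on 3 generators of nilpotency class c, over a field K of characteristic zero, is central, i.e., satisfies x·y ∈ Z(F_{3,c}) for all x,y. -/

import Mathlib

structure IsCPAStructure (K : Type*) {L : Type*} [CommRing K] [LieRing L] [LieAlgebra K L]
    (mul : L →ₗ[K] L →ₗ[K] L) : Prop where
  comm : ∀ x y : L, mul x y = mul y x
  bracket_mul : ∀ x y z : L, mul ⁅x, y⁆ z = mul x (mul y z) - mul y (mul x z)
  mul_bracket : ∀ x y z : L, mul x ⁅y, z⁆ = ⁅mul x y, z⁆ + ⁅y, mul x z⁆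

/-- The free-nilpotent Lie algebra \`F_{g,c}\` on \`g\` generators of nilpotency class \`c\`:
the quotient of the free Lie algebra on \`g\` generators by the \`(c+1)\`-st term \`𝔤^{c+1}\` of
its lower central series (which is \`lowerCentralSeries c\` in Mathlib's indexing). -/
abbrev FreeNilpotentLieAlgebra (K : Type*) [Field K] (g c : ℕ) :=
  FreeLieAlgebra K (Fin g) ⧸
    LieModule.lowerCentralSeries K (FreeLieAlgebra K (Fin g)) (FreeLieAlgebra K (Fin g)) c

/-!
Elements are read through their word coefficients in the tensor algebra: by the
Dynkin–Specht–Wever lemma, an element lies in the `n`-th term of the lower central series (counted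
from `0`) iff its coefficients at all words of length at most `n` vanish. Left multiplications are
derivations, so it is enough to show that products of generators lie in the term of index `c - 1`,
and this is done one degree at a time.

* Linear part: expand `⁅x, y⁆ · ⁅x, z⁆ = ⁅x, z⁆ · ⁅x, y⁆` in degree three, for three distinct
  generators.
* Degree two: for each letter `l`, the coefficients at the words `[k, l]` define a commutative
  product on `K^g` with values in the hyperplane `f = 0`, where `f` is the `l`-th coordinate, and
  the second axiom makes its multiplication operators represent the bracket `f y • x - f x • y`. It
  follows that multiplication by `e_l` is minus an idempotent on that hyperplane. The traces of
  these idempotents add up to zero, because the degree-two coefficients are antisymmetric and the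
  product is commutative; in characteristic zero each idempotent is therefore zero.
* Higher degrees: `⁅x · x, y⁆ - ⁅x · y, x⁆` vanishes in the lowest degree in question. Comparing
  coefficients rotates words, which kills every word containing a third letter; powers of one letter
  have coefficient zero in any Lie element of degree at least two.
-/

open LieModule (lowerCentralSeries)
open Finset.HasAntidiagonal (antidiagonal mem_antidiagonal)

/-- The lower central series of `L`, with `γ[R,L] 0 = L`. -/
local notation "γ[" R "," L "]" => LieModule.lowerCentralSeries R L L

/-! ### Lower central series and derivations -/

section LowerCentralSeries

variable {R L M : Type*} [CommRing R] [LieRing L] [LieAlgebra R L] [AddCommGroup M] [Module R M]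
  [LieRingModule L M]

theorem lie_mem_lowerCentralSeries_succ {n : ℕ} (x : L) {m : M}
    (hm : m ∈ lowerCentralSeries R L M n) : ⁅x, m⁆ ∈ lowerCentralSeries R L M (n + 1) := by
  rw [LieModule.lowerCentralSeries_succ]
  exact LieSubmodule.lie_mem_lie (LieSubmodule.mem_top x) hm

variable (R) in
theorem lie_mem_lowerCentralSeries_one (x : L) (m : M) : ⁅x, m⁆ ∈ lowerCentralSeries R L M 1 :=
  lie_mem_lowerCentralSeries_succ x (LieSubmodule.mem_top m)

variable [LieModule R L M]

theorem lowerCentralSeries_succ_le {n : ℕ} {S : Submodule R M}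
    (h : ∀ x : L, ∀ m ∈ lowerCentralSeries R L M n, ⁅x, m⁆ ∈ S) :
    (lowerCentralSeries R L M (n + 1)).toSubmodule ≤ S := by
  rw [LieModule.lowerCentralSeries_succ, LieSubmodule.lieIdeal_oper_eq_linear_span',
    Submodule.span_le]
  rintro _ ⟨x, -, m, hm, rfl⟩
  exact h x m hm

theorem lie_mem_lowerCentralSeries {i j : ℕ} {x : L} {m : M}
    (hx : x ∈ γ[R,L] i) (hm : m ∈ lowerCentralSeries R L M j) :
    ⁅x, m⁆ ∈ lowerCentralSeries R L M (i + j + 1) := by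
  induction i generalizing j x m with
  | zero => simpa using lie_mem_lowerCentralSeries_succ x hm
  | succ i ih =>
    refine lowerCentralSeries_succ_le
      (S := (lowerCentralSeries R L M (i + 1 + j + 1)).toSubmodule.comap
        ((LieModule.toEnd R L M : L →ₗ[R] Module.End R M).flip m)) (fun y z hz ↦ ?_) hx
    change ⁅⁅y, z⁆, m⁆ ∈ lowerCentralSeries R L M (i + 1 + j + 1)
    rw [lie_lie, add_right_comm i 1 j]
    exact sub_mem (lie_mem_lowerCentralSeries_succ y (ih hz hm))
      (ih hz (lie_mem_lowerCentralSeries_succ y hm))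

end LowerCentralSeries

theorem linearMap_eq_of_lieSpan_eq_top {R L N : Type*} [CommRing R] [LieRing L] [LieAlgebra R L]
    [AddCommGroup N] [Module R N] {s : Set L} (hs : LieSubalgebra.lieSpan R L s = ⊤)
    {f f' : L →ₗ[R] N} (h : ∀ x ∈ s, f x = f' x) (hlie : ∀ x y : L, f ⁅x, y⁆ = f' ⁅x, y⁆) :
    f = f' := by
  ext x
  have hx : x ∈ LieSubalgebra.lieSpan R L s := hs ▸ LieSubalgebra.mem_top x
  induction hx using LieSubalgebra.lieSpan_induction with
  | mem x hx => exact h x hx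
  | zero => simp
  | add x y _ _ hx hy => rw [map_add, map_add, hx, hy]
  | smul r x _ hx => rw [map_smul, map_smul, hx]
  | lie x y _ _ _ _ => exact hlie x y

section Derivation

variable {R L : Type*} [CommRing R] [LieRing L] [LieAlgebra R L] (D : LieDerivation R L L)

theorem lieDerivation_mem_of_lieSpan_eq_top {s : Set L} (hs : LieSubalgebra.lieSpan R L s = ⊤)
    {I : LieIdeal R L} (h : ∀ x ∈ s, D x ∈ I) (x : L) : D x ∈ I := by
  have hx : x ∈ LieSubalgebra.lieSpan R L s := hs ▸ LieSubalgebra.mem_top x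
  induction hx using LieSubalgebra.lieSpan_induction with
  | mem x hx => exact h x hx
  | zero => simp
  | add x y _ _ hx hy => simpa using add_mem hx hy
  | smul r x _ hx => simpa using I.smul_mem r hx
  | lie x y _ _ hx hy =>
    rw [D.apply_lie_eq_sub]
    exact sub_mem (I.lie_mem hy) (I.lie_mem hx)

theorem lieDerivation_mem_lowerCentralSeries_add {n : ℕ}
    (hD : ∀ x, D x ∈ γ[R,L] n) {j : ℕ} {x : L}
    (hx : x ∈ γ[R,L] j) : D x ∈ γ[R,L] (j + n) := by
  induction j generalizing x with
  | zero => simpa using hD x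
  | succ j ih =>
    refine lowerCentralSeries_succ_le
      (S := (γ[R,L] (j + 1 + n)).toSubmodule.comap (D : L →ₗ[R] L))
      (fun y z hz ↦ ?_) hx
    change D ⁅y, z⁆ ∈ γ[R,L] (j + 1 + n)
    rw [D.apply_lie_eq_add, add_right_comm j 1 n]
    refine add_mem (lie_mem_lowerCentralSeries_succ y (ih hz)) ?_
    rw [add_comm j n]
    exact lie_mem_lowerCentralSeries (hD y) hz

theorem lieDerivation_sub_mem_lowerCentralSeries_one {s : Set L}
    (hs : LieSubalgebra.lieSpan R L s = ⊤) (h : ∀ x ∈ s, D x = x) (x : L) :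
    D x - x ∈ γ[R,L] 1 := by
  set I := γ[R,L] 1
  have mk_eq : I.toSubmodule.mkQ ∘ₗ D = I.toSubmodule.mkQ :=
    linearMap_eq_of_lieSpan_eq_top hs (fun x hx ↦ congrArg _ (h x hx)) fun x y ↦
      (Submodule.Quotient.eq _).2 <| sub_mem
        (lieDerivation_mem_lowerCentralSeries_add D (n := 0) (by simp)
          (lie_mem_lowerCentralSeries_one R x y))
        (lie_mem_lowerCentralSeries_one R x y)
  exact (Submodule.Quotient.eq _).1 (LinearMap.congr_fun mk_eq x)

theorem lieDerivation_sub_smul_mem_lowerCentralSeries_succ {s : Set L}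
    (hs : LieSubalgebra.lieSpan R L s = ⊤) (h : ∀ x ∈ s, D x = x) {n : ℕ} {x : L}
    (hx : x ∈ γ[R,L] n) :
    D x - (n + 1) • x ∈ γ[R,L] (n + 1) := by
  have h₁ := lieDerivation_sub_mem_lowerCentralSeries_one D hs h
  induction n generalizing x with
  | zero => simpa using h₁ x
  | succ n ih =>
    refine lowerCentralSeries_succ_le
      (S := (γ[R,L] (n + 1 + 1)).toSubmodule.comap
        ((D : L →ₗ[R] L) - (n + 1 + 1) • LinearMap.id)) (fun y z hz ↦ ?_) hx
    change D ⁅y, z⁆ - (n + 1 + 1) • ⁅y, z⁆ ∈ γ[R,L] (n + 1 + 1)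
    have key : D ⁅y, z⁆ - (n + 1 + 1) • ⁅y, z⁆ = ⁅y, D z - (n + 1) • z⁆ + ⁅D y - y, z⁆ := by
      rw [D.apply_lie_eq_add, lie_sub, sub_lie, lie_nsmul, succ_nsmul _ (n + 1)]
      abel
    rw [key]
    refine add_mem (lie_mem_lowerCentralSeries_succ y (ih hz)) ?_
    rw [add_comm n 1]
    exact lie_mem_lowerCentralSeries (h₁ y) hz

end Derivation

/-! ### Word coefficients in the free Lie algebra -/

section FreeLieAlgebra

variable {R X : Type*} [CommRing R]

variable (R X) in
theorem lieSpan_range_freeLieAlgebra_of :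
    LieSubalgebra.lieSpan R (FreeLieAlgebra R X) (Set.range (FreeLieAlgebra.of R)) = ⊤ := by
  set S := LieSubalgebra.lieSpan R (FreeLieAlgebra R X) (Set.range (FreeLieAlgebra.of R))
  let f : FreeLieAlgebra R X →ₗ⁅R⁆ S := FreeLieAlgebra.lift R fun i ↦
    ⟨FreeLieAlgebra.of R i, LieSubalgebra.subset_lieSpan (Set.mem_range_self i)⟩
  have hf : S.incl.comp f = LieHom.id := FreeLieAlgebra.hom_ext fun i ↦ by simp [f]
  refine eq_top_iff.2 fun x _ ↦ ?_
  have hx : (f x : FreeLieAlgebra R X) = x := LieHom.congr_fun hf x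
  exact hx ▸ (f x).2

/-- The free associative algebra on `X`, realised as the monoid algebra of words so that the
coefficient of a word can be read off. -/
abbrev WordAlgebra (R X : Type*) [CommRing R] := MonoidAlgebra R (FreeMonoid X)

attribute [local instance] LieRing.ofAssociativeRing

namespace WordAlgebra

/-- The coefficient of the word `w`, as a linear functional. -/
noncomputable def wordCoeff (w : List X) : WordAlgebra R X →ₗ[R] R :=
  Finsupp.lapply (FreeMonoid.ofList w) ∘ₗ (MonoidAlgebra.coeffLinearEquiv R).toLinearMap

theorem wordCoeff_apply (w : List X) (a : WordAlgebra R X) :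
    wordCoeff w a = a.coeff (FreeMonoid.ofList w) := rfl

theorem wordCoeff_single [DecidableEq X] (w : List X) (v : FreeMonoid X) (r : R) :
    wordCoeff w (MonoidAlgebra.single v r) = if w = v.toList then r else 0 := by
  classical
  rw [wordCoeff_apply, MonoidAlgebra.coeff_single, Finsupp.single_apply]
  exact if_congr eq_comm rfl rfl

theorem wordCoeff_mul (w : List X) (a b : WordAlgebra R X) :
    wordCoeff w (a * b) = ∑ p ∈ antidiagonal w.length,
      wordCoeff (w.take p.1) a * wordCoeff (w.drop p.1) b := by
  classical
  have split_mem (q : FreeMonoid X × FreeMonoid X) :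
      q ∈ (antidiagonal w.length).image (fun p ↦
        (FreeMonoid.ofList (w.take p.1), FreeMonoid.ofList (w.drop p.1))) ↔
      q.1 * q.2 = FreeMonoid.ofList w := by
    simp only [Finset.mem_image, mem_antidiagonal]
    constructor
    · rintro ⟨p, -, rfl⟩
      rw [← FreeMonoid.ofList_append, List.take_append_drop]
    · intro hq
      obtain rfl : q.1.toList ++ q.2.toList = w := congrArg FreeMonoid.toList hq
      exact ⟨(q.1.toList.length, q.2.toList.length), by simp, by simp⟩
  rw [wordCoeff_apply, MonoidAlgebra.coeff_mul_antidiag a b _ _ (split_mem _),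
    Finset.sum_image fun p hp q hq h ↦ ?_]
  · rfl
  · have hlen : (w.take p.1).length = (w.take q.1).length := congrArg (fun q ↦ q.1.toList.length) h
    simp only [SetLike.mem_coe, mem_antidiagonal, List.length_take] at hp hq hlen
    exact Prod.ext (by omega) (by omega)

theorem wordCoeff_replicate_mul_comm (m : ℕ) (i : X) (a b : WordAlgebra R X) :
    wordCoeff (List.replicate m i) (a * b) = wordCoeff (List.replicate m i) (b * a) := by
  simp only [wordCoeff_mul, List.length_replicate, List.take_replicate, List.drop_replicate]
  rw [← Finset.Nat.sum_antidiagonal_swap]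
  refine Finset.sum_congr rfl fun p hp ↦ ?_
  rw [mem_antidiagonal] at hp
  simp [← hp, mul_comm]

/-- The canonical map from the free Lie algebra to its enveloping algebra. -/
noncomputable def ofLie : FreeLieAlgebra R X →ₗ⁅R⁆ WordAlgebra R X :=
  FreeLieAlgebra.lift R fun i ↦ MonoidAlgebra.single (FreeMonoid.of i) 1

theorem ofLie_of (i : X) :
    ofLie (FreeLieAlgebra.of R i) = MonoidAlgebra.single (FreeMonoid.of i) (1 : R) :=
  FreeLieAlgebra.lift_of_apply ..

theorem ofLie_lie (x y : FreeLieAlgebra R X) :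
    ofLie ⁅x, y⁆ = ofLie x * ofLie y - ofLie y * ofLie x := by
  rw [LieHom.map_lie, LieRing.of_associative_ring_bracket]

theorem map_ofLie_eq_zero_of_map_mul_comm {φ : WordAlgebra R X →ₗ[R] R}
    (hφ : ∀ i, φ (MonoidAlgebra.single (FreeMonoid.of i) 1) = 0)
    (hcomm : ∀ a b, φ (a * b) = φ (b * a)) (x : FreeLieAlgebra R X) : φ (ofLie x) = 0 := by
  refine LinearMap.congr_fun (f := φ ∘ₗ ofLie.toLinearMap) (g := 0)
    (linearMap_eq_of_lieSpan_eq_top (lieSpan_range_freeLieAlgebra_of R X) ?_ fun x y ↦ ?_) x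
  · rintro _ ⟨i, rfl⟩
    exact (congrArg φ (ofLie_of i)).trans (hφ i)
  · change φ (ofLie ⁅x, y⁆) = 0
    rw [ofLie_lie, map_sub, hcomm, sub_self]

theorem wordCoeff_nil_ofLie (x : FreeLieAlgebra R X) : wordCoeff [] (ofLie x) = 0 := by
  classical
  exact map_ofLie_eq_zero_of_map_mul_comm (fun i ↦ by simp [wordCoeff_single])
    (fun a b ↦ by simp [wordCoeff_mul, mul_comm]) x

theorem wordCoeff_pair_swap_ofLie (a b : X) (x : FreeLieAlgebra R X) :
    wordCoeff [a, b] (ofLie x) = -wordCoeff [b, a] (ofLie x) := by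
  classical
  refine eq_neg_of_add_eq_zero_left (map_ofLie_eq_zero_of_map_mul_comm
    (φ := wordCoeff [a, b] + wordCoeff [b, a]) (fun i ↦ by simp [wordCoeff_single])
    (fun p q ↦ ?_) x)
  simp only [LinearMap.add_apply, wordCoeff_mul]
  simp [Finset.Nat.antidiagonal_succ]
  ring

theorem wordCoeff_replicate_ofLie {m : ℕ} (hm : m ≠ 1) (i : X) (x : FreeLieAlgebra R X) :
    wordCoeff (List.replicate m i) (ofLie x) = 0 := by
  classical
  refine map_ofLie_eq_zero_of_map_mul_comm (fun j ↦ ?_) (wordCoeff_replicate_mul_comm m i) x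
  rw [wordCoeff_single, if_neg]
  exact fun h ↦ hm (by simpa using congrArg List.length h)

theorem wordCoeff_ofLie_of_mem_lowerCentralSeries {n : ℕ} {x : FreeLieAlgebra R X}
    (hx : x ∈ γ[R,FreeLieAlgebra R X] n) {w : List X} (hw : w.length ≤ n) :
    wordCoeff w (ofLie x) = 0 := by
  induction n generalizing x w with
  | zero => rw [List.length_eq_zero_iff.1 (Nat.le_zero.1 hw), wordCoeff_nil_ofLie]
  | succ n ih =>
    suffices h : (γ[R,FreeLieAlgebra R X] (n + 1)).toSubmodule ≤
        LinearMap.ker (wordCoeff w ∘ₗ (ofLie : _ →ₗ⁅R⁆ WordAlgebra R X).toLinearMap) from h hx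
    refine lowerCentralSeries_succ_le fun y z hz ↦ ?_
    change wordCoeff w (ofLie ⁅y, z⁆) = 0
    rw [ofLie_lie, map_sub, wordCoeff_mul, wordCoeff_mul, ← Finset.sum_sub_distrib]
    refine Finset.sum_eq_zero fun p hp ↦ ?_
    rw [mem_antidiagonal] at hp
    have take_eq : wordCoeff (w.take p.1) (ofLie z) * wordCoeff (w.drop p.1) (ofLie y) = 0 := by
      rcases Nat.eq_zero_or_pos p.2 with h | h
      · rw [List.drop_of_length_le (by omega), wordCoeff_nil_ofLie, mul_zero]
      · rw [ih hz (by rw [List.length_take]; omega), zero_mul]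
    have drop_eq : wordCoeff (w.take p.1) (ofLie y) * wordCoeff (w.drop p.1) (ofLie z) = 0 := by
      rcases Nat.eq_zero_or_pos p.1 with h | h
      · rw [h, List.take_zero, wordCoeff_nil_ofLie, zero_mul]
      · rw [ih hz (by rw [List.length_drop]; omega), mul_zero]
    rw [take_eq, drop_eq, sub_zero]

/-- The right-normed bracket `⁅i₁, ⁅i₂, …, iₙ⁆⁆` of the letters of a word. -/
noncomputable def rightNormedBracket : List X → FreeLieAlgebra R X
  | [] => 0
  | [i] => FreeLieAlgebra.of R i
  | i :: j :: w => ⁅FreeLieAlgebra.of R i, rightNormedBracket (j :: w)⁆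

theorem rightNormedBracket_mem_lowerCentralSeries {n : ℕ} {w : List X} (h : n < w.length) :
    (rightNormedBracket w : FreeLieAlgebra R X) ∈ γ[R,FreeLieAlgebra R X] n := by
  induction n generalizing w with
  | zero => simp
  | succ n ih =>
    match w, h with
    | i :: j :: v, h => exact lie_mem_lowerCentralSeries_succ _ (ih (by simpa using h))

/-- The unnormalised Dynkin operator: replace each word by its right-normed bracket. -/
noncomputable def dynkin : WordAlgebra R X →ₗ[R] FreeLieAlgebra R X :=
  Finsupp.linearCombination R (fun w : FreeMonoid X ↦ rightNormedBracket w.toList) ∘ₗ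
    (MonoidAlgebra.coeffLinearEquiv R).toLinearMap

theorem dynkin_single (w : FreeMonoid X) (r : R) :
    dynkin (MonoidAlgebra.single w r) = r • rightNormedBracket w.toList := by
  simp [dynkin]

theorem dynkin_mem_lowerCentralSeries {n : ℕ} {a : WordAlgebra R X}
    (h : ∀ w : List X, w.length ≤ n → wordCoeff w a = 0) :
    dynkin a ∈ γ[R,FreeLieAlgebra R X] n := by
  refine sum_mem fun w hw ↦ (γ[R,FreeLieAlgebra R X] n).smul_mem _
    (rightNormedBracket_mem_lowerCentralSeries ?_)
  contrapose! hw
  exact Finsupp.notMem_support_iff.2 (h w.toList hw)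

theorem dynkin_single_of_mul (i : X) (a : WordAlgebra R X) :
    dynkin (MonoidAlgebra.single (FreeMonoid.of i) 1 * a) =
      ⁅FreeLieAlgebra.of R i, dynkin a⁆ + wordCoeff [] a • FreeLieAlgebra.of R i := by
  classical
  induction a using MonoidAlgebra.induction_linear with
  | zero => simp
  | add a b ha hb => rw [mul_add, map_add, ha, hb, map_add, map_add, lie_add, add_smul]; abel
  | single w r =>
    rw [MonoidAlgebra.single_mul_single, dynkin_single, dynkin_single, wordCoeff_single, one_mul,
      lie_smul, FreeMonoid.toList_of_mul]
    rcases w.toList with _ | ⟨j, v⟩ <;> simp [rightNormedBracket]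

theorem dynkin_ofLie_mul (x : FreeLieAlgebra R X) {a : WordAlgebra R X}
    (ha : wordCoeff [] a = 0) : dynkin (ofLie x * a) = ⁅x, dynkin a⁆ := by
  have hx : x ∈ LieSubalgebra.lieSpan R (FreeLieAlgebra R X) (Set.range (FreeLieAlgebra.of R)) :=
    lieSpan_range_freeLieAlgebra_of R X ▸ LieSubalgebra.mem_top x
  induction hx using LieSubalgebra.lieSpan_induction generalizing a with
  | mem x hx =>
    obtain ⟨i, rfl⟩ := hx
    rw [ofLie_of, dynkin_single_of_mul, ha, zero_smul, add_zero]
  | zero => simp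
  | add x y _ _ hx hy => rw [map_add, add_mul, map_add, hx ha, hy ha, add_lie]
  | smul r x _ hx => rw [map_smul, smul_mul_assoc, map_smul, hx ha, smul_lie]
  | lie x y _ _ hx hy =>
    have nil_mul (z : FreeLieAlgebra R X) : wordCoeff [] (ofLie z * a) = 0 := by
      simp [wordCoeff_mul, ha]
    rw [ofLie_lie, sub_mul, map_sub, mul_assoc, mul_assoc, hx (nil_mul y), hy (nil_mul x), hx ha,
      hy ha, lie_lie]

theorem dynkin_ofLie_lie (x y : FreeLieAlgebra R X) :
    dynkin (ofLie ⁅x, y⁆) = ⁅x, dynkin (ofLie y)⁆ - ⁅y, dynkin (ofLie x)⁆ := by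
  rw [ofLie_lie, map_sub, dynkin_ofLie_mul _ (wordCoeff_nil_ofLie y),
    dynkin_ofLie_mul _ (wordCoeff_nil_ofLie x)]

/-- The Euler derivation of the free Lie algebra, multiplying the component of degree `n` by `n`
(the Dynkin–Specht–Wever lemma), realised as the Dynkin operator. -/
noncomputable def eulerDerivation : LieDerivation R (FreeLieAlgebra R X) (FreeLieAlgebra R X) where
  toLinearMap := dynkin ∘ₗ (ofLie : FreeLieAlgebra R X →ₗ⁅R⁆ WordAlgebra R X).toLinearMap
  leibniz' := dynkin_ofLie_lie

theorem eulerDerivation_of (i : X) :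
    eulerDerivation (FreeLieAlgebra.of R i) = FreeLieAlgebra.of R i := by
  change dynkin (ofLie (FreeLieAlgebra.of R i)) = _
  simp [ofLie_of, dynkin_single, rightNormedBracket]

theorem mem_lowerCentralSeries_iff {K : Type*} [Field K] [CharZero K] {n : ℕ}
    {x : FreeLieAlgebra K X} : x ∈ γ[K,FreeLieAlgebra K X] n ↔
      ∀ w : List X, w.length ≤ n → wordCoeff w (ofLie x) = 0 := by
  refine ⟨fun hx w hw ↦ wordCoeff_ofLie_of_mem_lowerCentralSeries hx hw, fun h ↦ ?_⟩
  induction n with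
  | zero => simp
  | succ n ih =>
    have euler_mem : eulerDerivation x ∈ γ[K,FreeLieAlgebra K X] (n + 1) :=
      dynkin_mem_lowerCentralSeries h
    have sub_mem_succ := lieDerivation_sub_smul_mem_lowerCentralSeries_succ eulerDerivation
      (lieSpan_range_freeLieAlgebra_of K X) (Set.forall_mem_range.2 eulerDerivation_of)
      (ih fun w hw ↦ h w (by omega))
    have smul_mem : (n + 1 : K) • x ∈ γ[K,FreeLieAlgebra K X] (n + 1) := by
      simpa [← Nat.cast_smul_eq_nsmul K] using sub_mem euler_mem sub_mem_succ
    exact ((γ[K,FreeLieAlgebra K X] (n + 1)).toSubmodule.smul_mem_iff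
      (Nat.cast_add_one_ne_zero n)).1 smul_mem

end WordAlgebra

end FreeLieAlgebra

/-! ### Word coefficients in free-nilpotent Lie algebras -/

namespace FreeNilpotentLieAlgebra

variable {K : Type*} [Field K] {g c : ℕ}

/-- The quotient map from the free Lie algebra. -/
noncomputable def mk : FreeLieAlgebra K (Fin g) →ₗ⁅K⁆ FreeNilpotentLieAlgebra K g c :=
  { (γ[K,FreeLieAlgebra K (Fin g)] c).toSubmodule.mkQ with
    map_lie' := fun {x y} ↦ LieSubmodule.Quotient.mk_bracket
      (I := γ[K,FreeLieAlgebra K (Fin g)] c) x y }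

theorem mk_surjective :
    Function.Surjective (mk : FreeLieAlgebra K (Fin g) → FreeNilpotentLieAlgebra K g c) :=
  Submodule.mkQ_surjective _

theorem mk_eq_zero {x : FreeLieAlgebra K (Fin g)} :
    (mk x : FreeNilpotentLieAlgebra K g c) = 0 ↔ x ∈ γ[K,FreeLieAlgebra K (Fin g)] c :=
  Submodule.Quotient.mk_eq_zero _

theorem mem_lowerCentralSeries_iff_exists_mk {n : ℕ} {x : FreeNilpotentLieAlgebra K g c} :
    x ∈ γ[K,FreeNilpotentLieAlgebra K g c] n ↔
      ∃ y ∈ γ[K,FreeLieAlgebra K (Fin g)] n, mk y = x := by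
  rw [← LieIdeal.lowerCentralSeries_map_eq n (mk_surjective (K := K) (g := g) (c := c))]
  refine ⟨fun hx ↦ ?_, ?_⟩
  · obtain ⟨y, hy⟩ := LieIdeal.mem_map_of_surjective mk_surjective hx
    exact ⟨y, y.2, hy⟩
  · rintro ⟨y, hy, rfl⟩
    exact LieIdeal.mem_map hy

variable (K g c) in
theorem lowerCentralSeries_eq_bot :
    γ[K,FreeNilpotentLieAlgebra K g c] c = ⊥ := by
  refine (LieSubmodule.eq_bot_iff _).2 fun x hx ↦ ?_
  obtain ⟨y, hy, rfl⟩ := mem_lowerCentralSeries_iff_exists_mk.1 hx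
  exact mk_eq_zero.2 hy

/-- The image in the quotient of the `i`-th free generator. -/
noncomputable def gen (i : Fin g) : FreeNilpotentLieAlgebra K g c := mk (FreeLieAlgebra.of K i)

variable (K g c) in
theorem lieSpan_range_gen :
    LieSubalgebra.lieSpan K (FreeNilpotentLieAlgebra K g c) (Set.range gen) = ⊤ := by
  have range_gen : Set.range gen = (mk : _ → FreeNilpotentLieAlgebra K g c) ''
      Set.range (FreeLieAlgebra.of K) := Set.range_comp ..
  rw [range_gen, ← LieSubalgebra.map_lieSpan, lieSpan_range_freeLieAlgebra_of]
  exact SetLike.ext' (Set.image_univ.trans mk_surjective.range_eq)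

attribute [local instance] LieRing.ofAssociativeRing

/-- The coefficient of the word `w` in the tensor algebra; the quotient only retains those of words
of length at most `c`, and the others are set to zero. -/
noncomputable def wordCoeff (w : List (Fin g)) : FreeNilpotentLieAlgebra K g c →ₗ[K] K :=
  Submodule.liftQ _ (if w.length ≤ c then WordAlgebra.wordCoeff w ∘ₗ WordAlgebra.ofLie.toLinearMap
    else 0) fun x hx ↦ by
      split_ifs with hw
      · exact WordAlgebra.wordCoeff_ofLie_of_mem_lowerCentralSeries hx hw
      · rfl

theorem wordCoeff_mk (w : List (Fin g)) (x : FreeLieAlgebra K (Fin g)) :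
    wordCoeff w (mk x : FreeNilpotentLieAlgebra K g c) =
      if w.length ≤ c then WordAlgebra.wordCoeff w (WordAlgebra.ofLie x) else 0 := by
  refine (Submodule.liftQ_apply _ _ x).trans ?_
  split_ifs <;> rfl

theorem wordCoeff_mk_of_le {w : List (Fin g)} (hw : w.length ≤ c) (x : FreeLieAlgebra K (Fin g)) :
    wordCoeff w (mk x : FreeNilpotentLieAlgebra K g c) =
      WordAlgebra.wordCoeff w (WordAlgebra.ofLie x) :=
  (wordCoeff_mk w x).trans (if_pos hw)

theorem wordCoeff_gen (hc : 1 ≤ c) (w : List (Fin g)) (i : Fin g) :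
    wordCoeff w (gen i : FreeNilpotentLieAlgebra K g c) = if w = [i] then 1 else 0 := by
  rw [gen, wordCoeff_mk, WordAlgebra.ofLie_of, WordAlgebra.wordCoeff_single,
    FreeMonoid.toList_of, ← ite_and]
  exact if_congr (and_iff_right_of_imp fun h ↦ h ▸ hc) rfl rfl

theorem wordCoeff_lie {w : List (Fin g)} (hw : w.length ≤ c)
    (x y : FreeNilpotentLieAlgebra K g c) :
    wordCoeff w ⁅x, y⁆ = ∑ p ∈ antidiagonal w.length,
      (wordCoeff (w.take p.1) x * wordCoeff (w.drop p.1) y -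
        wordCoeff (w.take p.1) y * wordCoeff (w.drop p.1) x) := by
  obtain ⟨x, rfl⟩ := mk_surjective x
  obtain ⟨y, rfl⟩ := mk_surjective y
  rw [← LieHom.map_lie, wordCoeff_mk_of_le hw, WordAlgebra.ofLie_lie, map_sub,
    WordAlgebra.wordCoeff_mul, WordAlgebra.wordCoeff_mul, ← Finset.sum_sub_distrib]
  refine Finset.sum_congr rfl fun p _ ↦ ?_
  have take_le : (w.take p.1).length ≤ c := (List.take_sublist _ _).length_le.trans hw
  have drop_le : (w.drop p.1).length ≤ c := (List.drop_sublist _ _).length_le.trans hw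
  simp only [wordCoeff_mk_of_le take_le, wordCoeff_mk_of_le drop_le]

theorem wordCoeff_pair_swap (a b : Fin g) (x : FreeNilpotentLieAlgebra K g c) :
    wordCoeff [a, b] x = -wordCoeff [b, a] x := by
  obtain ⟨x, rfl⟩ := mk_surjective x
  rw [wordCoeff_mk, wordCoeff_mk, WordAlgebra.wordCoeff_pair_swap_ofLie, neg_ite, neg_zero]
  rfl

theorem wordCoeff_replicate {m : ℕ} (hm : m ≠ 1) (i : Fin g)
    (x : FreeNilpotentLieAlgebra K g c) : wordCoeff (List.replicate m i) x = 0 := by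
  obtain ⟨x, rfl⟩ := mk_surjective x
  rw [wordCoeff_mk, WordAlgebra.wordCoeff_replicate_ofLie hm, ite_self]

theorem wordCoeff_nil (x : FreeNilpotentLieAlgebra K g c) : wordCoeff [] x = 0 := by
  obtain ⟨x, rfl⟩ := mk_surjective x
  rw [wordCoeff_mk, WordAlgebra.wordCoeff_nil_ofLie, ite_self]

theorem wordCoeff_pair_lie (hc : 2 ≤ c) (a b : Fin g) (x y : FreeNilpotentLieAlgebra K g c) :
    wordCoeff [a, b] ⁅x, y⁆ =
      wordCoeff [a] x * wordCoeff [b] y - wordCoeff [a] y * wordCoeff [b] x := by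
  simp [wordCoeff_lie (w := [a, b]) hc, Finset.Nat.antidiagonal_succ, wordCoeff_nil]

theorem wordCoeff_triple_lie (hc : 3 ≤ c) (a b : Fin g) (x y : FreeNilpotentLieAlgebra K g c) :
    wordCoeff [a, b, b] ⁅x, y⁆ =
      wordCoeff [a, b] x * wordCoeff [b] y - wordCoeff [a, b] y * wordCoeff [b] x := by
  have pair_self (z : FreeNilpotentLieAlgebra K g c) : wordCoeff [b, b] z = 0 :=
    wordCoeff_replicate (m := 2) (by decide) b z
  simp [wordCoeff_lie (w := [a, b, b]) hc, Finset.Nat.antidiagonal_succ, wordCoeff_nil, pair_self]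

theorem wordCoeff_triple_lie_lie (hc : 3 ≤ c) (i j k : Fin g)
    (x y z : FreeNilpotentLieAlgebra K g c) :
    wordCoeff [i, j, k] ⁅x, ⁅y, z⁆⁆ =
      wordCoeff [i] x * (wordCoeff [j] y * wordCoeff [k] z - wordCoeff [j] z * wordCoeff [k] y) -
        (wordCoeff [i] y * wordCoeff [j] z - wordCoeff [i] z * wordCoeff [j] y) *
          wordCoeff [k] x := by
  have singleton_lie (l : Fin g) : wordCoeff [l] ⁅y, z⁆ = 0 := by
    simp [wordCoeff_lie (w := [l]) (show 1 ≤ c by omega), Finset.Nat.antidiagonal_succ,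
      wordCoeff_nil]
  simp [wordCoeff_lie (w := [i, j, k]) hc, Finset.Nat.antidiagonal_succ, wordCoeff_nil,
    singleton_lie, wordCoeff_pair_lie (show 2 ≤ c by omega)]

theorem wordCoeff_lie_gen {v : List (Fin g)} (hv : v.length + 2 ≤ c) (s t i : Fin g)
    (x : FreeNilpotentLieAlgebra K g c) :
    wordCoeff (s :: (v ++ [t])) ⁅x, (gen i : FreeNilpotentLieAlgebra K g c)⁆ =
      (if t = i then wordCoeff (s :: v) x else 0) -
        if s = i then wordCoeff (v ++ [t]) x else 0 := by
  have hgen := wordCoeff_gen (K := K) (g := g) (show 1 ≤ c by omega)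
  have sum_right : ∑ p ∈ antidiagonal (v.length + 2), wordCoeff ((s :: (v ++ [t])).take p.1) x *
      wordCoeff ((s :: (v ++ [t])).drop p.1) (gen i : FreeNilpotentLieAlgebra K g c) =
      if t = i then wordCoeff (s :: v) x else 0 := by
    rw [Finset.sum_eq_single (v.length + 1, 1) (fun p hp hne ↦ ?_) (by simp)]
    · simp [hgen]
    · rw [hgen, if_neg, mul_zero]
      refine fun h ↦ hne ?_
      have length_eq := congrArg List.length h
      simp only [List.length_drop, List.length_cons, List.length_append, List.length_nil,
        mem_antidiagonal] at length_eq hp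
      exact Prod.ext (by omega) (by omega)
  have sum_left : ∑ p ∈ antidiagonal (v.length + 2),
      wordCoeff ((s :: (v ++ [t])).take p.1) (gen i : FreeNilpotentLieAlgebra K g c) *
        wordCoeff ((s :: (v ++ [t])).drop p.1) x =
      if s = i then wordCoeff (v ++ [t]) x else 0 := by
    rw [Finset.sum_eq_single (1, v.length + 1) (fun p hp hne ↦ ?_)
      fun h ↦ absurd (mem_antidiagonal.2 (Nat.add_comm 1 _)) h]
    · simp [hgen]
    · rw [hgen, if_neg, zero_mul]
      refine fun h ↦ hne ?_
      have length_eq := congrArg List.length h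
      simp only [List.length_take, List.length_cons, List.length_append, List.length_nil,
        mem_antidiagonal] at length_eq hp
      exact Prod.ext (by omega) (by omega)
  have length_word : (s :: (v ++ [t])).length = v.length + 2 := by simp
  rw [wordCoeff_lie (length_word ▸ hv), length_word, ← sum_right, ← sum_left,
    ← Finset.sum_sub_distrib]

theorem mem_lowerCentralSeries_iff [CharZero K] {n : ℕ} (hn : n ≤ c)
    {x : FreeNilpotentLieAlgebra K g c} :
    x ∈ γ[K,FreeNilpotentLieAlgebra K g c] n ↔
      ∀ w : List (Fin g), w.length ≤ n → wordCoeff w x = 0 := by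
  rw [mem_lowerCentralSeries_iff_exists_mk]
  constructor
  · rintro ⟨y, hy, rfl⟩ w hw
    rw [wordCoeff_mk_of_le (hw.trans hn), WordAlgebra.mem_lowerCentralSeries_iff.1 hy w hw]
  · obtain ⟨y, rfl⟩ := mk_surjective x
    refine fun h ↦ ⟨y, WordAlgebra.mem_lowerCentralSeries_iff.2 fun w hw ↦ ?_, rfl⟩
    rw [← wordCoeff_mk_of_le (hw.trans hn), h w hw]

end FreeNilpotentLieAlgebra

/-! ### Commutative products over a hyperplane -/

section HyperplaneProduct

variable {R V : Type*} [CommRing R] [AddCommGroup V] [Module R V]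

/-- A commutative product with values in the hyperplane `f = 0` whose multiplication operators
represent the Lie bracket `f y • x - f x • y` on `V`. The homogeneous part of degree two of a
CPA-structure on a free-nilpotent Lie algebra splits into products of this kind. -/
structure IsHyperplaneProduct (f : V →ₗ[R] R) (B : V →ₗ[R] V →ₗ[R] V) : Prop where
  comm : ∀ x y, B x y = B y x
  apply_mul : ∀ x y, f (B x y) = 0
  commutator : ∀ x y z, B x (B y z) - B y (B x z) = f y • B x z - f x • B y z

namespace IsHyperplaneProduct

/-- The operator `v ↦ e · (f v • e - v)`, which turns out to be idempotent when `f e = 1`. -/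
def negMulLeft (f : V →ₗ[R] R) (B : V →ₗ[R] V →ₗ[R] V) (e : V) : V →ₗ[R] V :=
  f.smulRight (B e e) - B e

variable {f : V →ₗ[R] R} {B : V →ₗ[R] V →ₗ[R] V} {e : V}

theorem negMulLeft_apply (v : V) : negMulLeft f B e v = f v • B e e - B e v := rfl

theorem mul_left_eq_zero_of_negMulLeft_eq_zero (h : negMulLeft f B e = 0) {x : V} (hx : f x = 0) :
    B e x = 0 := by
  simpa [negMulLeft_apply, hx] using LinearMap.congr_fun h x

variable (hB : IsHyperplaneProduct f B)

include hB

theorem trace_negMulLeft [Module.Free R V] [Module.Finite R V] :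
    LinearMap.trace R V (negMulLeft f B e) = -LinearMap.trace R V (B e) := by
  rw [negMulLeft, map_sub, LinearMap.trace_smulRight, hB.apply_mul, zero_sub]

theorem mul_mul_sub_of_apply_eq_zero (he : f e = 1) {x : V} (hx : f x = 0) (z : V) :
    B x (B e z) - B e (B x z) = B x z := by
  simpa [he, hx] using hB.commutator x e z

theorem mul_mul_eq_neg (he : f e = 1) {x : V} (hx : f x = 0) : B e (B e x) = -B e x := by
  -- On the hyperplane `ℓ = B (e · e)` equals `(B e)² + B e`, so it commutes with `B e`, whereas
  -- the commutator relation gives `[ℓ, B e] = ℓ`.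
  have mul_sq {y : V} (hy : f y = 0) : B (B e e) y = B e (B e y) + B e y := by
    have h := hB.mul_mul_sub_of_apply_eq_zero he hy e
    rw [hB.comm y e, hB.comm y] at h
    rw [sub_eq_iff_eq_add.1 h, add_comm]
  have commutator_sq := hB.mul_mul_sub_of_apply_eq_zero he (hB.apply_mul e e) x
  rw [mul_sq hx, mul_sq (hB.apply_mul e x), map_add, sub_self] at commutator_sq
  exact eq_neg_of_add_eq_zero_left commutator_sq.symm

theorem isIdempotentElem_negMulLeft (he : f e = 1) :
    IsIdempotentElem (negMulLeft f B e) := by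
  refine LinearMap.ext fun v ↦ ?_
  have apply_sub : f (f v • e - v) = 0 := by simp [he]
  have apply_eq : negMulLeft f B e v = B e (f v • e - v) := by simp [negMulLeft_apply]
  rw [Module.End.mul_apply, negMulLeft_apply, apply_eq, hB.apply_mul,
    hB.mul_mul_eq_neg he apply_sub]
  simp

theorem mul_eq_zero_of_negMulLeft_eq_zero (he : f e = 1) (h : negMulLeft f B e = 0) {x y : V}
    (hx : f x = 0) (hy : f y = 0) : B x y = 0 := by
  rw [← hB.mul_mul_sub_of_apply_eq_zero he hx y, mul_left_eq_zero_of_negMulLeft_eq_zero h hy,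
    mul_left_eq_zero_of_negMulLeft_eq_zero h (hB.apply_mul x y), map_zero, sub_zero]

end IsHyperplaneProduct

theorem eq_zero_of_isIdempotentElem_of_sum_trace_eq_zero {K V ι : Type*} [Field K] [CharZero K]
    [AddCommGroup V] [Module K V] [FiniteDimensional K V] {s : Finset ι} {E : ι → V →ₗ[K] V}
    (hE : ∀ i ∈ s, IsIdempotentElem (E i)) (hs : ∑ i ∈ s, LinearMap.trace K V (E i) = 0) {i : ι}
    (hi : i ∈ s) : E i = 0 := by
  have trace_eq_finrank (j : ι) (hj : j ∈ s) :
      LinearMap.trace K V (E j) = (Module.finrank K (E j).range : K) :=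
    (LinearMap.IsIdempotentElem.isProj_range _ (hE j hj)).trace
  have sum_finrank : ∑ j ∈ s, Module.finrank K (E j).range = 0 := by
    rw [Finset.sum_congr rfl trace_eq_finrank] at hs
    exact_mod_cast hs
  refine LinearMap.IsIdempotentElem.eq_zero_of_trace_eq_zero (hE i hi) ?_
  rw [trace_eq_finrank i hi, Finset.sum_eq_zero_iff.1 sum_finrank i hi, Nat.cast_zero]

end HyperplaneProduct

namespace FreeNilpotentLieAlgebra

variable {K : Type*} [Field K] {g c : ℕ}

variable (K g c) in
/-- The linear combination of the generators with given coefficients. -/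
noncomputable def ofLinear : (Fin g → K) →ₗ[K] FreeNilpotentLieAlgebra K g c :=
  Fintype.linearCombination K gen

/-- The row of coefficients `k ↦ wordCoeff (k :: w)`: the linear part for `w = []`, and a column of
the antisymmetric matrix of degree-two coefficients for `w = [l]`. -/
noncomputable def coeffColumn (w : List (Fin g)) :
    FreeNilpotentLieAlgebra K g c →ₗ[K] Fin g → K :=
  LinearMap.pi fun k ↦ wordCoeff (k :: w)

/-- The coefficients at the words `[k, l]` of the products of linear elements, collected into a
product on `Fin g → K`. -/
noncomputable def columnProduct (mul : FreeNilpotentLieAlgebra K g c →ₗ[K]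
    FreeNilpotentLieAlgebra K g c →ₗ[K] FreeNilpotentLieAlgebra K g c) (l : Fin g) :
    (Fin g → K) →ₗ[K] (Fin g → K) →ₗ[K] Fin g → K :=
  (mul.compl₁₂ (ofLinear K g c) (ofLinear K g c)).compr₂ (coeffColumn [l])

theorem ofLinear_single (i : Fin g) : ofLinear K g c (Pi.single i 1) = gen i := by
  rw [ofLinear, Fintype.linearCombination_apply_single, one_smul]

theorem wordCoeff_singleton_ofLinear (hc : 1 ≤ c) (i : Fin g) (v : Fin g → K) :
    wordCoeff [i] (ofLinear K g c v) = v i := by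
  simp [ofLinear, Fintype.linearCombination_apply, wordCoeff_gen hc]

variable [CharZero K]
  {D : LieDerivation K (FreeNilpotentLieAlgebra K g c) (FreeNilpotentLieAlgebra K g c)}
  (hD : ∀ x, D x ∈ γ[K,FreeNilpotentLieAlgebra K g c] 1)

include hD

theorem wordCoeff_pair_lieDerivation (hc : 2 ≤ c) (a l : Fin g)
    (x : FreeNilpotentLieAlgebra K g c) :
    wordCoeff [a, l] (D x) = wordCoeff [a, l] (D (ofLinear K g c (coeffColumn [] x))) := by
  have sub_mem : x - ofLinear K g c (coeffColumn [] x) ∈ γ[K,FreeNilpotentLieAlgebra K g c] 1 := by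
    refine (mem_lowerCentralSeries_iff (show 1 ≤ c by omega)).2 fun w hw ↦ ?_
    match w, hw with
    | [], _ => exact wordCoeff_nil _
    | [k], _ => rw [map_sub, wordCoeff_singleton_ofLinear (by omega)]; exact sub_self _
  have h := (mem_lowerCentralSeries_iff hc).1
    (lieDerivation_mem_lowerCentralSeries_add D hD sub_mem) [a, l] le_rfl
  rwa [map_sub, map_sub, sub_eq_zero] at h

theorem wordCoeff_triple_lieDerivation (hc : 3 ≤ c) (a l : Fin g)
    {x : FreeNilpotentLieAlgebra K g c}
    (hx : x ∈ γ[K,FreeNilpotentLieAlgebra K g c] 1) :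
    wordCoeff [a, l, l] (D x) = wordCoeff [a, l] (D (ofLinear K g c (coeffColumn [l] x))) := by
  suffices h : (γ[K,FreeNilpotentLieAlgebra K g c] 1).toSubmodule ≤
      LinearMap.eqLocus (wordCoeff [a, l, l] ∘ₗ D.toLinearMap)
        (wordCoeff [a, l] ∘ₗ D.toLinearMap ∘ₗ ofLinear K g c ∘ₗ coeffColumn [l]) from h hx
  refine lowerCentralSeries_succ_le fun x y _ ↦ ?_
  change wordCoeff [a, l, l] (D ⁅x, y⁆) =
    wordCoeff [a, l] (D (ofLinear K g c (coeffColumn [l] ⁅x, y⁆)))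
  have linear_part_eq_zero (z : FreeNilpotentLieAlgebra K g c) : wordCoeff [l] (D z) = 0 :=
    (mem_lowerCentralSeries_iff (show 1 ≤ c by omega)).1 (hD z) [l] le_rfl
  have column_lie : coeffColumn [l] ⁅x, y⁆ =
      wordCoeff [l] y • coeffColumn [] x - wordCoeff [l] x • coeffColumn [] y :=
    funext fun k ↦ (wordCoeff_pair_lie (by omega) k l x y).trans (by simp [coeffColumn, mul_comm])
  rw [column_lie, D.apply_lie_eq_sub, map_sub, wordCoeff_triple_lie hc, wordCoeff_triple_lie hc,
    linear_part_eq_zero, linear_part_eq_zero]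
  simp only [map_sub, map_smul, ← wordCoeff_pair_lieDerivation hD (show 2 ≤ c by omega),
    smul_eq_mul]
  ring

end FreeNilpotentLieAlgebra

theorem eq_zero_of_mem_of_rotation_relation {X G : Type*} [DecidableEq X] [AddGroup G]
    {A B : List X → G} {x y z : X} (hxy : x ≠ y) (hzx : z ≠ x) (hzy : z ≠ y) {n : ℕ}
    (H : ∀ (s t : X) (v : List X), v.length = n →
      (if t = y then A (s :: v) else 0) - (if s = y then A (v ++ [t]) else 0) =
        (if t = x then B (s :: v) else 0) - (if s = x then B (v ++ [t]) else 0))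
    {w : List X} (hw : w.length = n + 1) (hz : z ∈ w) : A w = 0 ∧ B w = 0 := by
  -- Induction on the position of `z`: the relation moves the initial letters to the end.
  obtain ⟨p, r, rfl⟩ := List.append_of_mem hz
  rw [List.length_append, List.length_cons, ← add_assoc, add_left_inj] at hw
  clear hz
  induction p generalizing r with
  | nil =>
    have hr : r.length = n := by simpa using hw
    have at_y := H z y r hr
    have at_x := H z x r hr
    simp only [hzx, hzy, hxy, hxy.symm, if_true, if_false, sub_zero]
      at at_y at_x
    exact ⟨at_y, at_x.symm⟩
  | cons s p ih =>
    have rotated (t : X) : A (p ++ z :: r ++ [t]) = 0 ∧ B (p ++ z :: r ++ [t]) = 0 := by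
      simpa using ih (r ++ [t]) (by simp at hw ⊢; omega)
    have length_eq : (p ++ z :: r).length = n := by simp at hw ⊢; omega
    have at_y := H s y _ length_eq
    have at_x := H s x _ length_eq
    simp only [(rotated _).1, (rotated _).2, hxy, hxy.symm, if_true, if_false, ite_self, sub_zero]
      at at_y at_x
    exact ⟨at_y, at_x.symm⟩

/-! ### CPA-structures -/

namespace IsCPAStructure

section Lie

variable {R L : Type*} [CommRing R] [LieRing L] [LieAlgebra R L] {mul : L →ₗ[R] L →ₗ[R] L}
  (hmul : IsCPAStructure R mul)

/-- Left multiplication by `x` as a derivation, which is what the third axiom says. -/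
def leftDerivation (x : L) : LieDerivation R L L where
  toLinearMap := mul x
  leibniz' y z := by rw [hmul.mul_bracket, ← lie_skew (mul x y) z]; abel

include hmul

theorem mul_mem_of_lieSpan_eq_top {s : Set L} (hs : LieSubalgebra.lieSpan R L s = ⊤)
    {I : LieIdeal R L} (h : ∀ x ∈ s, ∀ y ∈ s, mul x y ∈ I) (x y : L) : mul x y ∈ I := by
  refine lieDerivation_mem_of_lieSpan_eq_top (hmul.leftDerivation x) hs (fun z hz ↦ ?_) y
  change mul x z ∈ I
  rw [hmul.comm]
  exact lieDerivation_mem_of_lieSpan_eq_top (hmul.leftDerivation z) hs (h z hz) x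

theorem lie_mul_add_lie_mul (x y z : L) :
    ⁅mul z x, y⁆ + ⁅x, mul z y⁆ = mul x (mul y z) - mul y (mul x z) := by
  rw [← hmul.mul_bracket, hmul.comm, hmul.bracket_mul]

theorem lie_mul_self_add_lie_mul_add_lie_mul (x y z : L) :
    ⁅mul x x, ⁅y, z⁆⁆ + ⁅mul x y, ⁅z, x⁆⁆ + ⁅mul x z, ⁅x, y⁆⁆ = 0 := by
  have expand (y z : L) : mul ⁅x, y⁆ ⁅x, z⁆ = ⁅⁅mul x x, y⁆, z⁆ + ⁅⁅x, mul x y⁆, z⁆ +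
      ⁅x, ⁅mul x z, y⁆⁆ + ⁅x, ⁅x, mul y z⁆⁆ := by
    rw [hmul.mul_bracket, hmul.comm ⁅x, y⁆ x, hmul.comm ⁅x, y⁆ z, hmul.mul_bracket x,
      hmul.mul_bracket z, hmul.comm z x, hmul.comm z y, add_lie, lie_add]
    abel
  have swap := hmul.comm ⁅x, y⁆ ⁅x, z⁆
  rw [expand, expand, hmul.comm z y, ← sub_eq_zero] at swap
  rw [← swap]
  simp only [leibniz_lie (mul x x) y z, leibniz_lie x (mul x y) z, leibniz_lie x (mul x z) y,
    ← lie_skew y (⁅mul x x, z⁆), ← lie_skew z x, lie_neg]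
  abel

end Lie

section FreeNilpotent

open FreeNilpotentLieAlgebra

variable {K : Type*} [Field K] {g c : ℕ}
  {mul : FreeNilpotentLieAlgebra K g c →ₗ[K]
    FreeNilpotentLieAlgebra K g c →ₗ[K] FreeNilpotentLieAlgebra K g c}
  (hmul : IsCPAStructure K mul)

include hmul

theorem mul_mem_of_mul_gen_gen_mem {I : LieIdeal K (FreeNilpotentLieAlgebra K g c)}
    (h : ∀ i j, mul (gen i) (gen j) ∈ I) (x y : FreeNilpotentLieAlgebra K g c) : mul x y ∈ I :=
  hmul.mul_mem_of_lieSpan_eq_top (lieSpan_range_gen K g c)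
    (Set.forall_mem_range.2 fun i ↦ Set.forall_mem_range.2 (h i)) x y

variable [CharZero K]

theorem wordCoeff_singleton_mul_gen_of_ne_right (hg : 3 ≤ g) (hc : 3 ≤ c) {a b i : Fin g}
    (hab : a ≠ b) (hib : i ≠ b) : wordCoeff [i] (mul (gen a) (gen b)) = 0 := by
  obtain ⟨d, hda, hdb⟩ := ENat.exists_ne_ne_of_three_le (by simpa using hg) a b
  have coeff_relation : wordCoeff [i] (mul (gen a) (gen b)) +
      (if i = a then wordCoeff [a] (mul (gen a) (gen b)) else 0) = 0 := by
    simpa [wordCoeff_triple_lie_lie hc, wordCoeff_gen (show 1 ≤ c by omega), hda, hdb, hab, hib]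
      using congrArg (wordCoeff [i, d, a])
        (hmul.lie_mul_self_add_lie_mul_add_lie_mul (gen a) (gen b) (gen d))
  split_ifs at coeff_relation with hia
  · exact add_self_eq_zero.1 (hia ▸ coeff_relation)
  · rwa [add_zero] at coeff_relation

theorem wordCoeff_singleton_mul_gen (hg : 3 ≤ g) (hc : 3 ≤ c) (a b i : Fin g) :
    wordCoeff [i] (mul (gen a) (gen b)) = 0 := by
  have off_diag {a b : Fin g} (hab : a ≠ b) (i : Fin g) :
      wordCoeff [i] (mul (gen a) (gen b)) = 0 := by
    by_cases hib : i = b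
    · rw [hmul.comm]
      exact hmul.wordCoeff_singleton_mul_gen_of_ne_right hg hc hab.symm (hib.trans_ne hab.symm)
    · exact hmul.wordCoeff_singleton_mul_gen_of_ne_right hg hc hab hib
  rcases ne_or_eq a b with hab | rfl
  · exact off_diag hab i
  obtain ⟨b, hba, -⟩ := ENat.exists_ne_ne_of_three_le (by simpa using hg) a a
  obtain ⟨d, hda, hdb⟩ := ENat.exists_ne_ne_of_three_le (by simpa using hg) a b
  have coeff_relation : wordCoeff [i] (mul (gen a) (gen a)) +
      (if i = d then wordCoeff [d] (mul (gen a) (gen a)) else 0) = 0 := by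
    simpa [wordCoeff_triple_lie_lie hc, wordCoeff_gen (show 1 ≤ c by omega), hda.symm, hdb,
      hdb.symm, hba.symm, off_diag] using congrArg (wordCoeff [i, b, d])
        (hmul.lie_mul_self_add_lie_mul_add_lie_mul (gen a) (gen b) (gen d))
  split_ifs at coeff_relation with hid
  · exact add_self_eq_zero.1 (hid ▸ coeff_relation)
  · rwa [add_zero] at coeff_relation

theorem mul_mem_lowerCentralSeries_one (hg : 3 ≤ g) (hc : 3 ≤ c)
    (x y : FreeNilpotentLieAlgebra K g c) : mul x y ∈ γ[K,FreeNilpotentLieAlgebra K g c] 1 := by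
  refine hmul.mul_mem_of_mul_gen_gen_mem (fun i j ↦ ?_) x y
  refine (mem_lowerCentralSeries_iff (show 1 ≤ c by omega)).2 fun w hw ↦ ?_
  match w, hw with
  | [], _ => exact wordCoeff_nil _
  | [k], _ => exact hmul.wordCoeff_singleton_mul_gen hg hc i j k

variable (hmul_mem : ∀ x y, mul x y ∈ γ[K,FreeNilpotentLieAlgebra K g c] 1)

include hmul_mem

theorem isHyperplaneProduct_columnProduct (hc : 3 ≤ c) (l : Fin g) :
    IsHyperplaneProduct (LinearMap.proj l) (columnProduct mul l) where
  comm x y := congrArg (coeffColumn [l]) (hmul.comm _ _)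
  apply_mul x y := wordCoeff_replicate (m := 2) (by decide) l _
  commutator x y z := by
    have triple_mul (u v w : Fin g → K) (k : Fin g) :
        wordCoeff [k, l, l] (mul (ofLinear K g c u) (mul (ofLinear K g c v) (ofLinear K g c w))) =
          columnProduct mul l u (columnProduct mul l v w) k :=
      wordCoeff_triple_lieDerivation (D := hmul.leftDerivation _) (hmul_mem _) hc k l
        (hmul_mem _ _)
    have linear_mul (u v : FreeNilpotentLieAlgebra K g c) : wordCoeff [l] (mul u v) = 0 :=
      (mem_lowerCentralSeries_iff (show 1 ≤ c by omega)).1 (hmul_mem u v) [l] le_rfl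
    funext k
    have relation := congrArg (wordCoeff [k, l, l]) (hmul.lie_mul_add_lie_mul
      (ofLinear K g c x) (ofLinear K g c y) (ofLinear K g c z))
    rw [map_add, map_sub, triple_mul, triple_mul, wordCoeff_triple_lie hc, wordCoeff_triple_lie hc,
      linear_mul, linear_mul, wordCoeff_singleton_ofLinear (by omega),
      wordCoeff_singleton_ofLinear (by omega), hmul.comm (ofLinear K g c z) (ofLinear K g c x),
      hmul.comm (ofLinear K g c z) (ofLinear K g c y)] at relation
    change columnProduct mul l x (columnProduct mul l y z) k -
        columnProduct mul l y (columnProduct mul l x z) k =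
      y l * wordCoeff [k, l] (mul (ofLinear K g c x) (ofLinear K g c z)) -
        x l * wordCoeff [k, l] (mul (ofLinear K g c y) (ofLinear K g c z))
    linear_combination -relation

theorem sum_trace_negMulLeft (hc : 3 ≤ c) :
    ∑ l, LinearMap.trace K (Fin g → K) (IsHyperplaneProduct.negMulLeft (LinearMap.proj l)
      (columnProduct mul l) (Pi.single l 1)) = 0 := by
  have trace_eq (l : Fin g) : LinearMap.trace K (Fin g → K) (columnProduct mul l (Pi.single l 1)) =
      ∑ k, wordCoeff [k, l] (mul (gen l) (gen k)) := by
    rw [LinearMap.trace_eq_matrix_trace K (Pi.basisFun K (Fin g)), Matrix.trace]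
    simp [columnProduct, ofLinear_single, coeffColumn]
  rw [Finset.sum_congr rfl fun l _ ↦
    (hmul.isHyperplaneProduct_columnProduct hmul_mem hc l).trace_negMulLeft]
  simp only [trace_eq, Finset.sum_neg_distrib, neg_eq_zero]
  refine self_eq_neg.1 ?_
  conv_lhs => rw [Finset.sum_comm]
  simp only [← Finset.sum_neg_distrib]
  refine Finset.sum_congr rfl fun l _ ↦ Finset.sum_congr rfl fun k _ ↦ ?_
  rw [wordCoeff_pair_swap, hmul.comm]

theorem wordCoeff_pair_mul_gen_of_ne (hc : 3 ≤ c) {a l i j : Fin g} (h : ¬(i = l ∧ j = l)) :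
    wordCoeff [a, l] (mul (gen i) (gen j)) = 0 := by
  have hB := hmul.isHyperplaneProduct_columnProduct hmul_mem hc
  have negMulLeft_eq_zero := eq_zero_of_isIdempotentElem_of_sum_trace_eq_zero
    (fun l _ ↦ (hB l).isIdempotentElem_negMulLeft (e := Pi.single l 1) (by simp))
    (hmul.sum_trace_negMulLeft hmul_mem hc) (Finset.mem_univ l)
  have proj_single {k : Fin g} (hk : k ≠ l) :
      LinearMap.proj (R := K) l (Pi.single k 1 : Fin g → K) = 0 := by simp [hk.symm]
  suffices h : columnProduct mul l (Pi.single i 1) (Pi.single j 1) = 0 by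
    simpa [columnProduct, ofLinear_single, coeffColumn] using congrFun h a
  rcases eq_or_ne i l with rfl | hi
  · exact IsHyperplaneProduct.mul_left_eq_zero_of_negMulLeft_eq_zero negMulLeft_eq_zero
      (proj_single fun hj ↦ h ⟨rfl, hj⟩)
  rcases eq_or_ne j l with rfl | hj
  · rw [(hB j).comm]
    exact IsHyperplaneProduct.mul_left_eq_zero_of_negMulLeft_eq_zero negMulLeft_eq_zero
      (proj_single hi)
  exact (hB l).mul_eq_zero_of_negMulLeft_eq_zero (by simp) negMulLeft_eq_zero (proj_single hi)
    (proj_single hj)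

theorem wordCoeff_pair_mul_gen (hc : 3 ≤ c) (a l i j : Fin g) :
    wordCoeff [a, l] (mul (gen i) (gen j)) = 0 := by
  by_cases h : i = l ∧ j = l
  · rcases eq_or_ne a l with rfl | ha
    · exact wordCoeff_replicate (m := 2) (by decide) a _
    · rw [wordCoeff_pair_swap, hmul.wordCoeff_pair_mul_gen_of_ne hmul_mem hc fun h' ↦
        ha (h'.1.symm.trans h.1), neg_zero]
  · exact hmul.wordCoeff_pair_mul_gen_of_ne hmul_mem hc h

theorem mul_mem_lowerCentralSeries_two (hc : 3 ≤ c) (x y : FreeNilpotentLieAlgebra K g c) :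
    mul x y ∈ γ[K,FreeNilpotentLieAlgebra K g c] 2 := by
  refine hmul.mul_mem_of_mul_gen_gen_mem (fun i j ↦ ?_) x y
  refine (mem_lowerCentralSeries_iff (show 2 ≤ c by omega)).2 fun w hw ↦ ?_
  match w, hw with
  | [k, l], _ => exact hmul.wordCoeff_pair_mul_gen hmul_mem hc k l i j
  | [], _ => exact wordCoeff_nil _
  | [k], _ =>
    exact (mem_lowerCentralSeries_iff (show 1 ≤ c by omega)).1 (hmul_mem _ _) [k] le_rfl

end FreeNilpotent

section Step

open FreeNilpotentLieAlgebra

variable {K : Type*} [Field K] [CharZero K] {g c n : ℕ}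
  {mul : FreeNilpotentLieAlgebra K g c →ₗ[K]
    FreeNilpotentLieAlgebra K g c →ₗ[K] FreeNilpotentLieAlgebra K g c}
  (hmul : IsCPAStructure K mul) (hmul_mem : ∀ x y, mul x y ∈ γ[K,FreeNilpotentLieAlgebra K g c] n)

include hmul hmul_mem

theorem rotation_relation_mul_gen (hn : 2 ≤ n) (hc : n + 2 ≤ c) (x y s t : Fin g)
    (v : List (Fin g)) (hv : v.length = n) :
    (if t = y then wordCoeff (s :: v) (mul (gen x) (gen x)) else 0) -
        (if s = y then wordCoeff (v ++ [t]) (mul (gen x) (gen x)) else 0) =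
      (if t = x then wordCoeff (s :: v) (mul (gen x) (gen y)) else 0) -
        (if s = x then wordCoeff (v ++ [t]) (mul (gen x) (gen y)) else 0) := by
  have mul_mul_mem (x y z : FreeNilpotentLieAlgebra K g c) :
      mul x (mul y z) ∈ γ[K,FreeNilpotentLieAlgebra K g c] (n + 2) :=
    LieModule.antitone_lowerCentralSeries K _ _ (by omega)
      (lieDerivation_mem_lowerCentralSeries_add (hmul.leftDerivation x) (hmul_mem x) (hmul_mem y z))
  have coeff_eq_zero := (mem_lowerCentralSeries_iff hc).1
    (hmul.lie_mul_add_lie_mul (gen x) (gen y) (gen x) ▸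
      sub_mem (mul_mul_mem (gen x) (gen y) (gen x)) (mul_mul_mem (gen y) (gen x) (gen x)))
    (s :: (v ++ [t])) (by simp [hv])
  rwa [← lie_skew (L := FreeNilpotentLieAlgebra K g c) (gen x), ← sub_eq_add_neg,
    map_sub, wordCoeff_lie_gen (hv ▸ hc), wordCoeff_lie_gen (hv ▸ hc), sub_eq_zero] at coeff_eq_zero

theorem wordCoeff_mul_gen_self (hg : 3 ≤ g) (hn : 2 ≤ n) (hc : n + 2 ≤ c) (x : Fin g)
    {w : List (Fin g)} (hw : w.length = n + 1) : wordCoeff w (mul (gen x) (gen x)) = 0 := by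
  by_cases hx : ∀ z ∈ w, z = x
  · rw [List.eq_replicate_of_mem hx]
    exact wordCoeff_replicate (by omega) x _
  · push Not at hx
    obtain ⟨z, hzw, hzx⟩ := hx
    obtain ⟨y, hyx, hyz⟩ := ENat.exists_ne_ne_of_three_le (by simpa using hg) x z
    exact (eq_zero_of_mem_of_rotation_relation (A := fun w ↦ wordCoeff w (mul (gen x) (gen x)))
      (B := fun w ↦ wordCoeff w (mul (gen x) (gen y))) hyx.symm hzx hyz.symm
      (hmul.rotation_relation_mul_gen hmul_mem hn hc x y) hw hzw).1

theorem wordCoeff_cons_mul_gen_of_ne (hg : 3 ≤ g) (hn : 2 ≤ n) (hc : n + 2 ≤ c) {x s : Fin g}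
    (hs : s ≠ x) (y : Fin g) {v : List (Fin g)} (hv : v.length = n) :
    wordCoeff (s :: v) (mul (gen x) (gen y)) = 0 := by
  have relation := hmul.rotation_relation_mul_gen hmul_mem hn hc x y s x v hv
  rw [hmul.wordCoeff_mul_gen_self hmul_mem hg hn hc x (by simp [hv]),
    hmul.wordCoeff_mul_gen_self hmul_mem hg hn hc x (by simp [hv])] at relation
  simpa [hs] using relation.symm

theorem mul_mem_lowerCentralSeries_succ (hg : 3 ≤ g) (hn : 2 ≤ n) (hc : n + 2 ≤ c)
    (x y : FreeNilpotentLieAlgebra K g c) :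
    mul x y ∈ γ[K,FreeNilpotentLieAlgebra K g c] (n + 1) := by
  refine hmul.mul_mem_of_mul_gen_gen_mem (fun i j ↦ ?_) x y
  refine (mem_lowerCentralSeries_iff (show n + 1 ≤ c by omega)).2 fun w hw ↦ ?_
  rcases hw.lt_or_eq with hlt | heq
  · exact (mem_lowerCentralSeries_iff (show n ≤ c by omega)).1 (hmul_mem _ _) w (by omega)
  obtain ⟨s, v, rfl⟩ := List.exists_cons_of_length_eq_add_one heq
  have hv : v.length = n := by simpa using heq
  rcases ne_or_eq s i with hsi | rfl
  · exact hmul.wordCoeff_cons_mul_gen_of_ne hmul_mem hg hn hc hsi j hv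
  rcases ne_or_eq s j with hsj | rfl
  · rw [hmul.comm]
    exact hmul.wordCoeff_cons_mul_gen_of_ne hmul_mem hg hn hc hsj s hv
  · exact hmul.wordCoeff_mul_gen_self hmul_mem hg hn hc s heq

end Step

section Central

open FreeNilpotentLieAlgebra

variable {K : Type*} [Field K] [CharZero K] {g c : ℕ}
  {mul : FreeNilpotentLieAlgebra K g c →ₗ[K]
    FreeNilpotentLieAlgebra K g c →ₗ[K] FreeNilpotentLieAlgebra K g c}

theorem mul_mem_lowerCentralSeries (hmul : IsCPAStructure K mul) (hg : 3 ≤ g) (hc : 3 ≤ c)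
    {n : ℕ} (hn : n + 1 ≤ c) (x y : FreeNilpotentLieAlgebra K g c) :
    mul x y ∈ γ[K,FreeNilpotentLieAlgebra K g c] n := by
  induction n generalizing x y with
  | zero => exact LieSubmodule.mem_top _
  | succ n ih =>
    match n with
    | 0 => exact hmul.mul_mem_lowerCentralSeries_one hg hc x y
    | 1 => exact hmul.mul_mem_lowerCentralSeries_two (ih (by omega)) hc x y
    | n + 2 => exact hmul.mul_mem_lowerCentralSeries_succ (ih (by omega)) hg (by omega) hn x y

end Central

end IsCPAStructure

theorem cpa_on_F3c_is_central_general {K : Type*} [Field K] [CharZero K] {g c : ℕ} (hg : 3 ≤ g)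
    (hc : 3 ≤ c) {mul : FreeNilpotentLieAlgebra K g c →ₗ[K]
      FreeNilpotentLieAlgebra K g c →ₗ[K] FreeNilpotentLieAlgebra K g c}
    (hmul : IsCPAStructure K mul) (x y : FreeNilpotentLieAlgebra K g c) :
    mul x y ∈ LieAlgebra.center K (FreeNilpotentLieAlgebra K g c) := by
  obtain ⟨n, rfl⟩ := Nat.exists_eq_succ_of_ne_zero (show c ≠ 0 by omega)
  refine (LieModule.mem_maxTrivSubmodule ..).2 fun z ↦ ?_
  have lie_mem := lie_mem_lowerCentralSeries_succ z
    (hmul.mul_mem_lowerCentralSeries hg hc le_rfl x y)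
  rwa [FreeNilpotentLieAlgebra.lowerCentralSeries_eq_bot] at lie_mem

/-- For every `c ≥ 3`, every CPA-structure on the free-nilpotent Lie algebra `F_{3,c}`
over a field of characteristic zero is central. -/
theorem cpa_on_F3c_is_central (K : Type*) [Field K] [CharZero K] :
    ∀ c : ℕ, 3 ≤ c →
      ∀ mul : FreeNilpotentLieAlgebra K 3 c →ₗ[K]
          FreeNilpotentLieAlgebra K 3 c →ₗ[K] FreeNilpotentLieAlgebra K 3 c,
        IsCPAStructure K mul →
          ∀ x y : FreeNilpotentLieAlgebra K 3 c,
            mul x y ∈ LieAlgebra.center K (FreeNilpotentLieAlgebra K 3 c) := by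
  intro c hc mul hmul x y
  exact cpa_on_F3c_is_central_general le_rfl hc hmul x y
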